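/- arXiv:2105.12966 — 2 statements merged into one kernel-verified Lean document; each statement's English description precedes it below -/
import Mathlib

section
/- Let σ1, σ2 : ℂ be such that G(σ1), G(σ2), Wᵀ * G(σ1) * V and Wᵀ * G(σ2) * V are invertible. If x1(σ1) and x1(σ2) lie in the column span of V, then the reduced second-order input vector is the projection of the full one: B̂₂(σ1, σ2) = Wᵀ *ᵥ B₂(σ1, σ2), i.e., Q_r *ᵥ (x̂1(σ1) ⊗ x̂1(σ2)) + (1/2 : ℂ) • (N_r *ᵥ (x̂1(σ1) + x̂1(σ2))) = Wᵀ *ᵥ (Q *ᵥ ((x1 σ1) ⊗ (x1 σ2)) + (1/2 : ℂ) • (N *ᵥ (x1 σ1 + x1 σ2))). -/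
open Matrix
open scoped Kronecker

noncomputable section

/-- Kronecker product of vectors: `(u ⊗ v) (l, j) = u l * v j`. -/
def vkron {n : ℕ} (u v : Fin n → ℂ) : Fin n × Fin n → ℂ :=
  fun p => u p.1 * v p.2

/-- The matrix pencil `G(s) = s • E - A`. -/
def Gm {n : ℕ} (E A : Matrix (Fin n) (Fin n) ℂ) (s : ℂ) : Matrix (Fin n) (Fin n) ℂ :=
  s • E - A

/-- Primal state of the first subsystem: `x1(s) = G(s)⁻¹ *ᵥ B`. -/
def x1 {n : ℕ} (E A : Matrix (Fin n) (Fin n) ℂ) (B : Fin n → ℂ) (s : ℂ) : Fin n → ℂ :=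
  (Gm E A s)⁻¹ *ᵥ B

/-- First-order transfer function `H1(s) = C ⬝ᵥ x1(s)`. -/
def H1 {n : ℕ} (E A : Matrix (Fin n) (Fin n) ℂ) (B C : Fin n → ℂ) (s : ℂ) : ℂ :=
  C ⬝ᵥ x1 E A B s

/-- Second-order input term `B₂(s1, s2)`. -/
def B2 {n : ℕ} (E A N : Matrix (Fin n) (Fin n) ℂ) (Q : Matrix (Fin n) (Fin n × Fin n) ℂ)
    (B : Fin n → ℂ) (s1 s2 : ℂ) : Fin n → ℂ :=
  Q *ᵥ vkron (x1 E A B s1) (x1 E A B s2) + (1/2 : ℂ) • (N *ᵥ (x1 E A B s1 + x1 E A B s2))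

/-- Primal state of the second subsystem: `x2(s1, s2) = G(s1+s2)⁻¹ *ᵥ B₂(s1, s2)`. -/
def x2 {n : ℕ} (E A N : Matrix (Fin n) (Fin n) ℂ) (Q : Matrix (Fin n) (Fin n × Fin n) ℂ)
    (B : Fin n → ℂ) (s1 s2 : ℂ) : Fin n → ℂ :=
  (Gm E A (s1 + s2))⁻¹ *ᵥ B2 E A N Q B s1 s2

/-- Second-order (symmetric) transfer function `H2(s1, s2) = C ⬝ᵥ x2(s1, s2)`. -/
def H2 {n : ℕ} (E A N : Matrix (Fin n) (Fin n) ℂ) (Q : Matrix (Fin n) (Fin n × Fin n) ℂ)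
    (B C : Fin n → ℂ) (s1 s2 : ℂ) : ℂ :=
  C ⬝ᵥ x2 E A N Q B s1 s2

/-- Dual state of the first subsystem: `y1(s) = (G(s)ᵀ)⁻¹ *ᵥ C`. -/
def y1 {n : ℕ} (E A : Matrix (Fin n) (Fin n) ℂ) (C : Fin n → ℂ) (s : ℂ) : Fin n → ℂ :=
  ((Gm E A s)ᵀ)⁻¹ *ᵥ C

/-- Mode-2 matricization: `Q⁽²⁾ j (l, i) = Q i (l, j)`. -/
def mode2 {n : ℕ} (Q : Matrix (Fin n) (Fin n × Fin n) ℂ) : Matrix (Fin n) (Fin n × Fin n) ℂ :=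
  fun j p => Q p.2 (p.1, j)

/-- Dual output term `C₂(s1, s2)`. -/
def C2 {n : ℕ} (E A N : Matrix (Fin n) (Fin n) ℂ) (Q : Matrix (Fin n) (Fin n × Fin n) ℂ)
    (B C : Fin n → ℂ) (s1 s2 : ℂ) : Fin n → ℂ :=
  mode2 Q *ᵥ vkron (x1 E A B s2) (y1 E A C (s1 + s2)) +
    (1/2 : ℂ) • (Nᵀ *ᵥ y1 E A C (s1 + s2))

/-- Dual state of the second subsystem: `y2(s1, s2) = (G(s1)ᵀ)⁻¹ *ᵥ C₂(s1, s2)`. -/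
def y2 {n : ℕ} (E A N : Matrix (Fin n) (Fin n) ℂ) (Q : Matrix (Fin n) (Fin n × Fin n) ℂ)
    (B C : Fin n → ℂ) (s1 s2 : ℂ) : Fin n → ℂ :=
  ((Gm E A s1)ᵀ)⁻¹ *ᵥ C2 E A N Q B C s1 s2

/-- `Q` is symmetric: `Q *ᵥ (u ⊗ v) = Q *ᵥ (v ⊗ u)` for all `u, v`. -/
def QSymm {n : ℕ} (Q : Matrix (Fin n) (Fin n × Fin n) ℂ) : Prop :=
  ∀ u v : Fin n → ℂ, Q *ᵥ vkron u v = Q *ᵥ vkron v u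

/-- Euclidean (ℓ²) norm of a vector in `Fin n → ℂ`. -/
def vnorm {n : ℕ} (v : Fin n → ℂ) : ℝ := ‖(WithLp.equiv 2 (Fin n → ℂ)).symm v‖

/-- ℓ²-induced operator norm of a square complex matrix. -/
def mnorm {n : ℕ} (M : Matrix (Fin n) (Fin n) ℂ) : ℝ := ‖Matrix.toEuclideanCLM (𝕜 := ℂ) M‖

theorem x1_red_aux {n r : ℕ} (E A : Matrix (Fin n) (Fin n) ℂ)
    (B : Fin n → ℂ) (V W : Matrix (Fin n) (Fin r) ℂ) (s : ℂ)
    (hG : IsUnit (Gm E A s)) (hGr : IsUnit (Wᵀ * Gm E A s * V))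
    (c : Fin r → ℂ) (hc : x1 E A B s = V *ᵥ c) :
    x1 (Wᵀ * E * V) (Wᵀ * A * V) (Wᵀ *ᵥ B) s = c := by
  have hg : Gm (Wᵀ * E * V) (Wᵀ * A * V) s = Wᵀ * Gm E A s * V := by
    simp [Gm, Matrix.mul_sub, Matrix.sub_mul]
  have hB : B = Gm E A s *ᵥ (V *ᵥ c) := by
    rw [← hc, x1, Matrix.mulVec_mulVec,
      Matrix.mul_nonsing_inv _ ((Matrix.isUnit_iff_isUnit_det _).1 hG), Matrix.one_mulVec]
  have hW : Wᵀ *ᵥ B = (Wᵀ * Gm E A s * V) *ᵥ c := by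
    conv_lhs => rw [hB]
    simp only [Matrix.mulVec_mulVec, Matrix.mul_assoc]
  rw [x1, hg, hW, Matrix.mulVec_mulVec,
    Matrix.nonsing_inv_mul _ ((Matrix.isUnit_iff_isUnit_det _).1 hGr), Matrix.one_mulVec]

theorem vkron_mulVec_aux {n r : ℕ} (V : Matrix (Fin n) (Fin r) ℂ) (c d : Fin r → ℂ) :
    (V ⊗ₖ V) *ᵥ vkron c d = vkron (V *ᵥ c) (V *ᵥ d) := by
  ext ⟨i, j⟩
  simp only [Matrix.mulVec, dotProduct, vkron, Matrix.kroneckerMap_apply,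
    Fintype.sum_prod_type, Finset.sum_mul_sum]
  refine Finset.sum_congr rfl fun a _ => Finset.sum_congr rfl fun b _ => ?_
  ring

theorem reduced_B2_is_projection {n r : ℕ}
    (E A N : Matrix (Fin n) (Fin n) ℂ) (Q : Matrix (Fin n) (Fin n × Fin n) ℂ)
    (B : Fin n → ℂ) (V W : Matrix (Fin n) (Fin r) ℂ) (σ1 σ2 : ℂ)
    (hG1 : IsUnit (Gm E A σ1)) (hG2 : IsUnit (Gm E A σ2))
    (hGr1 : IsUnit (Wᵀ * Gm E A σ1 * V)) (hGr2 : IsUnit (Wᵀ * Gm E A σ2 * V))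
    (hx1 : ∃ c : Fin r → ℂ, x1 E A B σ1 = V *ᵥ c)
    (hx2 : ∃ c : Fin r → ℂ, x1 E A B σ2 = V *ᵥ c) :
    B2 (Wᵀ * E * V) (Wᵀ * A * V) (Wᵀ * N * V) (Wᵀ * Q * (V ⊗ₖ V)) (Wᵀ *ᵥ B) σ1 σ2 =
      Wᵀ *ᵥ B2 E A N Q B σ1 σ2 := by
  obtain ⟨c, hc⟩ := hx1
  obtain ⟨d, hd⟩ := hx2
  rw [B2, B2, x1_red_aux E A B V W σ1 hG1 hGr1 c hc, x1_red_aux E A B V W σ2 hG2 hGr2 d hd,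
    hc, hd, ← vkron_mulVec_aux, ← Matrix.mulVec_add]
  simp only [Matrix.mulVec_add, Matrix.mulVec_smul, Matrix.mulVec_mulVec, Matrix.mul_assoc]
end
end

section
/- (Lemma 2.2, multivariate moment matching.) Let σ_{1,1},…,σ_{1,k} and σ_{2,1},…,σ_{2,k} : ℂ, assume Q is symmetric, and assume that for each i the matrices G(σ_{1,i}), G(σ_{2,i}), G(σ_{1,i}+σ_{2,i}), Wᵀ * G(σ_{1,i}) * V, Wᵀ * G(σ_{2,i}) * V and Wᵀ * G(σ_{1,i}+σ_{2,i}) * V are invertible. Suppose the column span of V contains x1(σ_{1,i}), x1(σ_{2,i}) and x2(σ_{1,i}, σ_{2,i}) for all i, and the column span of W contains y1(σ_{1,i}+σ_{2,i}), y2(σ_{1,i}, σ_{2,i}) and y2(σ_{2,i}, σ_{1,i}) for all i. Then for each i: H1(σ_{1,i}) = Ĥ1(σ_{1,i}), H1(σ_{2,i}) = Ĥ1(σ_{2,i}), H1(σ_{1,i}+σ_{2,i}) = Ĥ1(σ_{1,i}+σ_{2,i}), H2(σ_{1,i}, σ_{2,i}) = Ĥ2(σ_{1,i}, σ_{2,i}),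 deriv (fun s => H2(s, σ_{2,i})) σ_{1,i} = deriv (fun s => Ĥ2(s, σ_{2,i})) σ_{1,i}, and deriv (fun s => H2(σ_{2,i}, s)) σ_{1,i} = deriv (fun s => Ĥ2(σ_{2,i}, s)) σ_{1,i}. -/
open Matrix
open scoped Kronecker

noncomputable section

open scoped Matrix.Norms.Operator in
theorem hasDerivAt_Gm_inv {n : ℕ} (E A : Matrix (Fin n) (Fin n) ℂ) (s : ℂ)
    (h : IsUnit (Gm E A s)) (i j : Fin n) :
    HasDerivAt (fun t => (Gm E A t)⁻¹ i j) (-((Gm E A s)⁻¹ * E * (Gm E A s)⁻¹) i j) s := by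
  obtain ⟨u, hu⟩ := h
  have h1 : HasDerivAt (fun t => Gm E A t) E s := by
    have := ((hasDerivAt_id s).smul_const E).sub_const A
    rw [one_smul] at this
    exact this
  have h2 := hasFDerivAt_ringInverse (𝕜 := ℂ) u
  rw [hu] at h2
  have h3 := h2.comp_hasDerivAt s h1
  have h4 := (((Matrix.entryLinearMap ℂ ℂ i j).toContinuousLinearMap).hasFDerivAt).comp_hasDerivAt s h3
  have e : ((u⁻¹ : (Matrix (Fin n) (Fin n) ℂ)ˣ) : Matrix (Fin n) (Fin n) ℂ) = (Gm E A s)⁻¹ := by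
    rw [← hu, Matrix.coe_units_inv]
  simp only [e] at h4
  have f : (fun t => (Gm E A t)⁻¹ i j) = fun t => Ring.inverse (Gm E A t) i j := by
    funext t
    rw [Matrix.nonsing_inv_eq_ringInverse]
  rw [f]
  exact h4

theorem hasDerivAt_solve {n : ℕ} (E A : Matrix (Fin n) (Fin n) ℂ) (s : ℂ)
    (h : IsUnit (Gm E A s)) (b : ℂ → Fin n → ℂ) (b' : Fin n → ℂ)
    (hb : ∀ i, HasDerivAt (fun t => b t i) (b' i) s) (i : Fin n) :
    HasDerivAt (fun t => ((Gm E A t)⁻¹ *ᵥ b t) i)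
      (((Gm E A s)⁻¹ *ᵥ (b' - E *ᵥ ((Gm E A s)⁻¹ *ᵥ b s))) i) s := by
  have := HasDerivAt.fun_sum (u := Finset.univ)
    (fun j _ => (hasDerivAt_Gm_inv E A s h i j).mul (hb j))
  simp only [Matrix.mulVec, dotProduct] at this ⊢
  refine this.congr_deriv ?_
  have e : ((Gm E A s)⁻¹ *ᵥ (b' - E *ᵥ ((Gm E A s)⁻¹ *ᵥ b s))) i =
    -((((Gm E A s)⁻¹ * E * (Gm E A s)⁻¹) *ᵥ b s) i) + ((Gm E A s)⁻¹ *ᵥ b') i := by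
    rw [Matrix.mulVec_sub, Matrix.mulVec_mulVec, Matrix.mulVec_mulVec,
      Pi.sub_apply]
    ring
  refine Eq.trans ?_ e.symm
  simp only [Matrix.mulVec, dotProduct, Finset.sum_add_distrib, neg_mul, Finset.sum_neg_distrib]

theorem dot_mode2 {n : ℕ} (Q : Matrix (Fin n) (Fin n × Fin n) ℂ) (u w y : Fin n → ℂ) :
    u ⬝ᵥ (mode2 Q *ᵥ vkron w y) = y ⬝ᵥ (Q *ᵥ vkron w u) := by
  simp only [dotProduct, Matrix.mulVec, mode2, vkron, Fintype.sum_prod_type, Finset.mul_sum]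
  rw [Finset.sum_comm]
  conv_rhs => rw [Finset.sum_comm]
  refine Finset.sum_congr rfl fun l _ => ?_
  rw [Finset.sum_comm]
  refine Finset.sum_congr rfl fun i _ => Finset.sum_congr rfl fun j _ => ?_
  ring

theorem dot_transpose_mulVec {m n : ℕ} (M : Matrix (Fin n) (Fin m) ℂ) (u : Fin m → ℂ)
    (v : Fin n → ℂ) : u ⬝ᵥ (Mᵀ *ᵥ v) = (M *ᵥ u) ⬝ᵥ v := by
  rw [Matrix.mulVec_transpose, dotProduct_comm, ← Matrix.dotProduct_mulVec, dotProduct_comm]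

theorem dot_inv {n : ℕ} (M : Matrix (Fin n) (Fin n) ℂ) (u v : Fin n → ℂ) :
    u ⬝ᵥ (M⁻¹ *ᵥ v) = ((Mᵀ)⁻¹ *ᵥ u) ⬝ᵥ v := by
  rw [← dot_transpose_mulVec, Matrix.transpose_nonsing_inv, Matrix.transpose_transpose]

theorem kron_mulVec_vkron {n r : ℕ} (V : Matrix (Fin n) (Fin r) ℂ) (u v : Fin r → ℂ) :
    (V ⊗ₖ V) *ᵥ vkron u v = vkron (V *ᵥ u) (V *ᵥ v) := by
  ext ⟨a, b⟩
  simp only [Matrix.mulVec, dotProduct, vkron, Matrix.kroneckerMap_apply,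
    Fintype.sum_prod_type, Finset.sum_mul_sum]
  refine Finset.sum_congr rfl fun i _ => Finset.sum_congr rfl fun j _ => ?_
  ring

theorem H2_deriv {n : ℕ} (E A N : Matrix (Fin n) (Fin n) ℂ)
    (Q : Matrix (Fin n) (Fin n × Fin n) ℂ) (B C : Fin n → ℂ) (hQ : QSymm Q) (s t : ℂ)
    (h1 : IsUnit (Gm E A s)) (h12 : IsUnit (Gm E A (s + t))) :
    HasDerivAt (fun z => H2 E A N Q B C z t)
      (-(y1 E A C (s + t) ⬝ᵥ (E *ᵥ x2 E A N Q B s t))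
        - y2 E A N Q B C s t ⬝ᵥ (E *ᵥ x1 E A B s)) s := by
  have hx : ∀ i, HasDerivAt (fun z => x1 E A B z i)
      ((-((Gm E A s)⁻¹ *ᵥ (E *ᵥ x1 E A B s))) i) s := by
    intro i
    have := hasDerivAt_solve E A s h1 (fun _ => B) 0 (fun i => hasDerivAt_const _ _) i
    simpa [x1, Matrix.mulVec_neg] using this
  set x' := -((Gm E A s)⁻¹ *ᵥ (E *ᵥ x1 E A B s)) with hx'
  have hb : ∀ i, HasDerivAt (fun z => B2 E A N Q B z t i)
      ((Q *ᵥ vkron x' (x1 E A B t) + (1/2 : ℂ) • (N *ᵥ x')) i) s := by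
    intro i
    have e1 := HasDerivAt.fun_sum (u := Finset.univ)
      (fun p (_ : p ∈ (Finset.univ : Finset (Fin n × Fin n))) =>
        ((hx p.1).mul_const (x1 E A B t p.2)).const_mul (Q i p))
    have e2 := (HasDerivAt.fun_sum (u := Finset.univ)
      (fun p (_ : p ∈ (Finset.univ : Finset (Fin n))) =>
        ((hx p).add_const (x1 E A B t p)).const_mul (N i p))).const_mul (1/2 : ℂ)
    exact e1.add e2
  have hs : HasDerivAt (fun z => z + t) 1 s := (hasDerivAt_id s).add_const t
  have hb2 : ∀ i, HasDerivAt (fun z => B2 E A N Q B (z - t) t i)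
      ((Q *ᵥ vkron x' (x1 E A B t) + (1/2 : ℂ) • (N *ᵥ x')) i) (s + t) := by
    intro i
    exact HasDerivAt.comp_sub_const (s + t) t (by rw [add_sub_cancel_right]; exact hb i)
  have hX : ∀ i, HasDerivAt (fun z => x2 E A N Q B z t i)
      (((Gm E A (s + t))⁻¹ *ᵥ ((Q *ᵥ vkron x' (x1 E A B t) + (1/2 : ℂ) • (N *ᵥ x'))
        - E *ᵥ x2 E A N Q B s t)) i) s := by
    intro i
    have := hasDerivAt_solve E A (s + t) h12 (fun z => B2 E A N Q B (z - t) t) _ hb2 i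
    have := HasDerivAt.comp_add_const s t this
    simpa [x2] using this
  have hH := HasDerivAt.fun_sum (u := Finset.univ)
      (fun p (_ : p ∈ (Finset.univ : Finset (Fin n))) => (hX p).const_mul (C p))
  refine HasDerivAt.congr_deriv (f := fun z => H2 E A N Q B C z t) hH ?_
  change C ⬝ᵥ ((Gm E A (s + t))⁻¹ *ᵥ ((Q *ᵥ vkron x' (x1 E A B t) + (1/2 : ℂ) • (N *ᵥ x'))
        - E *ᵥ x2 E A N Q B s t)) = _
  rw [dot_inv]
  change y1 E A C (s + t) ⬝ᵥ _ = _
  have e3 : y2 E A N Q B C s t ⬝ᵥ (E *ᵥ x1 E A B s) = - (x' ⬝ᵥ C2 E A N Q B C s t) := by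
    rw [y2, ← dot_inv, hx', neg_dotProduct, neg_neg, dotProduct_comm]
  rw [e3, C2, dotProduct_add, dot_mode2, dotProduct_smul, dot_transpose_mulVec, dotProduct_sub,
    dotProduct_add, dotProduct_smul, hQ, dotProduct_comm (N *ᵥ x')]
  ring

theorem H2_symm {n : ℕ} (E A N : Matrix (Fin n) (Fin n) ℂ)
    (Q : Matrix (Fin n) (Fin n × Fin n) ℂ) (B C : Fin n → ℂ) (hQ : QSymm Q) (s t : ℂ) :
    H2 E A N Q B C s t = H2 E A N Q B C t s := by
  simp only [H2, x2, B2]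
  rw [hQ, add_comm s t, add_comm (x1 E A B s)]

theorem QSymm_red {n r : ℕ} (Q : Matrix (Fin n) (Fin n × Fin n) ℂ)
    (V W : Matrix (Fin n) (Fin r) ℂ) (hQ : QSymm Q) : QSymm (Wᵀ * Q * (V ⊗ₖ V)) := by
  intro u v
  rw [← Matrix.mulVec_mulVec, ← Matrix.mulVec_mulVec, ← Matrix.mulVec_mulVec,
    ← Matrix.mulVec_mulVec, kron_mulVec_vkron, kron_mulVec_vkron, hQ]

theorem proj_solve {n r : ℕ} (M : Matrix (Fin n) (Fin n) ℂ) (V W : Matrix (Fin n) (Fin r) ℂ)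
    (b : Fin n → ℂ) (hM : IsUnit M) (hr : IsUnit (Wᵀ * M * V))
    (h : ∃ c : Fin r → ℂ, M⁻¹ *ᵥ b = V *ᵥ c) :
    V *ᵥ ((Wᵀ * M * V)⁻¹ *ᵥ (Wᵀ *ᵥ b)) = M⁻¹ *ᵥ b := by
  obtain ⟨c, hc⟩ := h
  have hb : b = M *ᵥ (V *ᵥ c) := by
    rw [← hc, Matrix.mulVec_mulVec, Matrix.mul_nonsing_inv _ ((Matrix.isUnit_iff_isUnit_det _).1 hM),
      Matrix.one_mulVec]
  have : (Wᵀ * M * V)⁻¹ *ᵥ (Wᵀ *ᵥ b) = c := by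
    have e : Wᵀ *ᵥ b = (Wᵀ * M * V) *ᵥ c := by
      rw [hb, ← Matrix.mulVec_mulVec, ← Matrix.mulVec_mulVec]
    rw [e, Matrix.mulVec_mulVec,
      Matrix.nonsing_inv_mul _ ((Matrix.isUnit_iff_isUnit_det _).1 hr), Matrix.one_mulVec]
  rw [this, hc]

theorem proj_solve_dual {n r : ℕ} (M : Matrix (Fin n) (Fin n) ℂ) (V W : Matrix (Fin n) (Fin r) ℂ)
    (b : Fin n → ℂ) (hM : IsUnit M) (hr : IsUnit (Wᵀ * M * V))
    (h : ∃ c : Fin r → ℂ, (Mᵀ)⁻¹ *ᵥ b = W *ᵥ c) :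
    W *ᵥ (((Wᵀ * M * V)ᵀ)⁻¹ *ᵥ (Vᵀ *ᵥ b)) = (Mᵀ)⁻¹ *ᵥ b := by
  have e : (Wᵀ * M * V)ᵀ = Vᵀ * Mᵀ * W := by
    simp [Matrix.transpose_mul, Matrix.mul_assoc]
  have := proj_solve Mᵀ W V b ((Matrix.isUnit_transpose M).2 hM)
    (by rw [← e]; exact (Matrix.isUnit_transpose _).2 hr) h
  rw [e, this]

theorem Gm_red {n r : ℕ} (E A : Matrix (Fin n) (Fin n) ℂ) (V W : Matrix (Fin n) (Fin r) ℂ)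
    (s : ℂ) : Gm (Wᵀ * E * V) (Wᵀ * A * V) s = Wᵀ * Gm E A s * V := by
  simp [Gm, Matrix.mul_sub, Matrix.sub_mul]

theorem mode2_red {n r : ℕ} (Q : Matrix (Fin n) (Fin n × Fin n) ℂ)
    (V W : Matrix (Fin n) (Fin r) ℂ) (x y : Fin r → ℂ) :
    mode2 (Wᵀ * Q * (V ⊗ₖ V)) *ᵥ vkron x y = Vᵀ *ᵥ (mode2 Q *ᵥ vkron (V *ᵥ x) (W *ᵥ y)) := by
  refine dotProduct_eq _ _ fun u => ?_
  rw [dotProduct_comm, dotProduct_comm _ u, dot_mode2, dot_transpose_mulVec, dot_mode2,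
    ← Matrix.mulVec_mulVec, ← Matrix.mulVec_mulVec, kron_mulVec_vkron, dot_transpose_mulVec]

theorem multivariate_moment_matching {n r k : ℕ}
    (E A N : Matrix (Fin n) (Fin n) ℂ) (Q : Matrix (Fin n) (Fin n × Fin n) ℂ)
    (B C : Fin n → ℂ) (V W : Matrix (Fin n) (Fin r) ℂ) (σ1 σ2 : Fin k → ℂ)
    (hQ : QSymm Q)
    (hG1 : ∀ i, IsUnit (Gm E A (σ1 i))) (hG2 : ∀ i, IsUnit (Gm E A (σ2 i)))
    (hG12 : ∀ i, IsUnit (Gm E A (σ1 i + σ2 i)))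
    (hGr1 : ∀ i, IsUnit (Wᵀ * Gm E A (σ1 i) * V))
    (hGr2 : ∀ i, IsUnit (Wᵀ * Gm E A (σ2 i) * V))
    (hGr12 : ∀ i, IsUnit (Wᵀ * Gm E A (σ1 i + σ2 i) * V))
    (hVx11 : ∀ i, ∃ c : Fin r → ℂ, x1 E A B (σ1 i) = V *ᵥ c)
    (hVx12 : ∀ i, ∃ c : Fin r → ℂ, x1 E A B (σ2 i) = V *ᵥ c)
    (hVx2 : ∀ i, ∃ c : Fin r → ℂ, x2 E A N Q B (σ1 i) (σ2 i) = V *ᵥ c)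
    (hWy1 : ∀ i, ∃ d : Fin r → ℂ, y1 E A C (σ1 i + σ2 i) = W *ᵥ d)
    (hWy21 : ∀ i, ∃ d : Fin r → ℂ, y2 E A N Q B C (σ1 i) (σ2 i) = W *ᵥ d)
    (hWy22 : ∀ i, ∃ d : Fin r → ℂ, y2 E A N Q B C (σ2 i) (σ1 i) = W *ᵥ d) :
    ∀ i,
      H1 E A B C (σ1 i) =
        H1 (Wᵀ * E * V) (Wᵀ * A * V) (Wᵀ *ᵥ B) (Vᵀ *ᵥ C) (σ1 i) ∧
      H1 E A B C (σ2 i) =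
        H1 (Wᵀ * E * V) (Wᵀ * A * V) (Wᵀ *ᵥ B) (Vᵀ *ᵥ C) (σ2 i) ∧
      H1 E A B C (σ1 i + σ2 i) =
        H1 (Wᵀ * E * V) (Wᵀ * A * V) (Wᵀ *ᵥ B) (Vᵀ *ᵥ C) (σ1 i + σ2 i) ∧
      H2 E A N Q B C (σ1 i) (σ2 i) =
        H2 (Wᵀ * E * V) (Wᵀ * A * V) (Wᵀ * N * V) (Wᵀ * Q * (V ⊗ₖ V))
          (Wᵀ *ᵥ B) (Vᵀ *ᵥ C) (σ1 i) (σ2 i) ∧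
      deriv (fun s => H2 E A N Q B C s (σ2 i)) (σ1 i) =
        deriv (fun s => H2 (Wᵀ * E * V) (Wᵀ * A * V) (Wᵀ * N * V) (Wᵀ * Q * (V ⊗ₖ V))
          (Wᵀ *ᵥ B) (Vᵀ *ᵥ C) s (σ2 i)) (σ1 i) ∧
      deriv (fun s => H2 E A N Q B C (σ2 i) s) (σ1 i) =
        deriv (fun s => H2 (Wᵀ * E * V) (Wᵀ * A * V) (Wᵀ * N * V) (Wᵀ * Q * (V ⊗ₖ V))
          (Wᵀ *ᵥ B) (Vᵀ *ᵥ C) (σ2 i) s) (σ1 i) := by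
  intro i
  have hx1 : ∀ s, IsUnit (Gm E A s) → IsUnit (Wᵀ * Gm E A s * V) →
      (∃ c : Fin r → ℂ, x1 E A B s = V *ᵥ c) →
      V *ᵥ x1 (Wᵀ * E * V) (Wᵀ * A * V) (Wᵀ *ᵥ B) s = x1 E A B s := by
    intro s h h' hc
    rw [x1, Gm_red]
    exact proj_solve _ V W B h h' hc
  have a1 := hx1 _ (hG1 i) (hGr1 i) (hVx11 i)
  have a2 := hx1 _ (hG2 i) (hGr2 i) (hVx12 i)
  have aB : B2 (Wᵀ * E * V) (Wᵀ * A * V) (Wᵀ * N * V) (Wᵀ * Q * (V ⊗ₖ V)) (Wᵀ *ᵥ B)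
      (σ1 i) (σ2 i) = Wᵀ *ᵥ B2 E A N Q B (σ1 i) (σ2 i) := by
    rw [B2, B2, ← Matrix.mulVec_mulVec, ← Matrix.mulVec_mulVec, kron_mulVec_vkron, a1, a2,
      ← Matrix.mulVec_mulVec, ← Matrix.mulVec_mulVec, Matrix.mulVec_add V, a1, a2,
      Matrix.mulVec_add Wᵀ, Matrix.mulVec_smul]
  have a3 : V *ᵥ x2 (Wᵀ * E * V) (Wᵀ * A * V) (Wᵀ * N * V) (Wᵀ * Q * (V ⊗ₖ V)) (Wᵀ *ᵥ B)
      (σ1 i) (σ2 i) = x2 E A N Q B (σ1 i) (σ2 i) := by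
    rw [x2, aB, Gm_red]
    exact proj_solve _ V W _ (hG12 i) (hGr12 i) (hVx2 i)
  have b1 : W *ᵥ y1 (Wᵀ * E * V) (Wᵀ * A * V) (Vᵀ *ᵥ C) (σ1 i + σ2 i)
      = y1 E A C (σ1 i + σ2 i) := by
    rw [y1, Gm_red]
    exact proj_solve_dual _ V W C (hG12 i) (hGr12 i) (hWy1 i)
  have bC : C2 (Wᵀ * E * V) (Wᵀ * A * V) (Wᵀ * N * V) (Wᵀ * Q * (V ⊗ₖ V)) (Wᵀ *ᵥ B) (Vᵀ *ᵥ C)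
      (σ1 i) (σ2 i) = Vᵀ *ᵥ C2 E A N Q B C (σ1 i) (σ2 i) := by
    have e : (Wᵀ * N * V)ᵀ = Vᵀ * Nᵀ * W := by
      simp [Matrix.transpose_mul, Matrix.mul_assoc]
    rw [C2, C2, mode2_red, a2, b1, e, ← Matrix.mulVec_mulVec, ← Matrix.mulVec_mulVec, b1,
      Matrix.mulVec_add, Matrix.mulVec_smul]
  have b2 : W *ᵥ y2 (Wᵀ * E * V) (Wᵀ * A * V) (Wᵀ * N * V) (Wᵀ * Q * (V ⊗ₖ V)) (Wᵀ *ᵥ B)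
      (Vᵀ *ᵥ C) (σ1 i) (σ2 i) = y2 E A N Q B C (σ1 i) (σ2 i) := by
    rw [y2, bC, Gm_red]
    exact proj_solve_dual _ V W _ (hG1 i) (hGr1 i) (hWy21 i)
  have hQr := QSymm_red Q V W hQ
  have d : deriv (fun s => H2 E A N Q B C s (σ2 i)) (σ1 i) =
        deriv (fun s => H2 (Wᵀ * E * V) (Wᵀ * A * V) (Wᵀ * N * V) (Wᵀ * Q * (V ⊗ₖ V))
          (Wᵀ *ᵥ B) (Vᵀ *ᵥ C) s (σ2 i)) (σ1 i) := by
    rw [(H2_deriv E A N Q B C hQ _ _ (hG1 i) (hG12 i)).deriv,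
      (H2_deriv _ _ _ _ _ _ hQr _ _ (by rw [Gm_red]; exact hGr1 i)
        (by rw [Gm_red]; exact hGr12 i)).deriv]
    simp only [← Matrix.mulVec_mulVec]
    rw [a1, a3, dot_transpose_mulVec, dot_transpose_mulVec, b1, b2]
  refine ⟨?_, ?_, ?_, ?_, d, ?_⟩
  · rw [H1, H1, dotProduct_comm (Vᵀ *ᵥ C), dot_transpose_mulVec, a1, dotProduct_comm]
  · rw [H1, H1, dotProduct_comm (Vᵀ *ᵥ C), dot_transpose_mulVec, a2, dotProduct_comm]
  · rw [H1, H1, x1, x1, dot_inv, dot_inv, dot_transpose_mulVec]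
    change y1 E A C _ ⬝ᵥ B = (W *ᵥ y1 _ _ _ _) ⬝ᵥ B
    rw [b1]
  · rw [H2, H2, dotProduct_comm (Vᵀ *ᵥ C), dot_transpose_mulVec, a3, dotProduct_comm]
  · simp only [H2_symm E A N Q B C hQ (σ2 i), H2_symm _ _ _ _ _ _ hQr (σ2 i)]
    exact d
end
end
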